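/- arXiv:2507.07316 — 2 statements merged into one kernel-verified Lean document; each statement's English description precedes it below -/
import Mathlib

section
/- Let Δ > 0, ε > 0, and b = Δ/ε. Let μ_{a,b} denote the Laplace measure on ℝ centered at a with scale b. For all a, a' ∈ ℝ with |a − a'| ≤ Δ and every Borel set A ⊆ ℝ, one has μ_{a,b}(A) ≤ e^ε · μ_{a',b}(A). -/
open MeasureTheory

/-- The Laplace density on ℝ with center `a` and scale `b`. -/
noncomputable def laplaceDensity (a b t : ℝ) : ℝ :=
  (1 / (2 * b)) * Real.exp (-|t - a| / b)

/-- The Laplace measure on ℝ with center `a` and scale `b`: the measure with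
density `laplaceDensity a b` with respect to Lebesgue measure. -/
noncomputable def laplaceMeasure (a b : ℝ) : Measure ℝ :=
  volume.withDensity (fun t => ENNReal.ofReal (laplaceDensity a b t))

/-- The Laplace mechanism with scale `b = Δ/ε` on a quantity of sensitivity `Δ`
satisfies `(ε, 0)`-differential privacy: for centers `a, a'` with `|a − a'| ≤ Δ`
and every Borel set `A`, `μ_{a,b}(A) ≤ e^ε · μ_{a',b}(A)`. -/
theorem laplace_mechanism_dp (Δ ε : ℝ) (hΔ : 0 < Δ) (hε : 0 < ε)
    (a a' : ℝ) (ha : |a - a'| ≤ Δ) (A : Set ℝ) (hA : MeasurableSet A) :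
    laplaceMeasure a (Δ / ε) A ≤ ENNReal.ofReal (Real.exp ε) * laplaceMeasure a' (Δ / ε) A := by
  unfold laplaceMeasure
  rw [withDensity_apply _ hA, withDensity_apply _ hA,
    ← lintegral_const_mul' _ _ ENNReal.ofReal_ne_top]
  refine lintegral_mono fun t => ?_
  simp only []
  rw [← ENNReal.ofReal_mul (Real.exp_pos ε).le]
  apply ENNReal.ofReal_le_ofReal
  unfold laplaceDensity
  have hb : 0 < Δ / ε := div_pos hΔ hε
  have h1 : -|t - a| / (Δ / ε) ≤ ε + -|t - a'| / (Δ / ε) := by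
    have h2 : ε = Δ / (Δ / ε) := by field_simp
    have h3 : |t - a'| ≤ |t - a| + |a - a'| := abs_sub_le t a a'
    calc -|t - a| / (Δ / ε) ≤ (Δ + -|t - a'|) / (Δ / ε) := by
          apply div_le_div_of_nonneg_right _ hb.le
          linarith
      _ = ε + -|t - a'| / (Δ / ε) := by rw [add_div, ← h2]
  calc 1 / (2 * (Δ / ε)) * Real.exp (-|t - a| / (Δ / ε))
      ≤ 1 / (2 * (Δ / ε)) * Real.exp (ε + -|t - a'| / (Δ / ε)) := by
        apply mul_le_mul_of_nonneg_left (Real.exp_le_exp.mpr h1)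
        positivity
    _ = Real.exp ε * (1 / (2 * (Δ / ε)) * Real.exp (-|t - a'| / (Δ / ε))) := by
        rw [Real.exp_add]; ring
end

section
/- Let T ≥ 1, ε > 0, and δ ∈ (0, 1). For each i ∈ {1,…,T} let μ_i and ν_i be probability measures on a measurable space X_i satisfying both μ_i(A) ≤ e^ε·ν_i(A) and ν_i(A) ≤ e^ε·μ_i(A) for every measurable A ⊆ X_i. Then setting ε_total = √(2·T·log(1/δ))·ε + T·ε·(e^ε − 1), the product measures satisfy (μ_1 ⊗ ⋯ ⊗ μ_T)(A) ≤ e^{ε_total} · (ν_1 ⊗ ⋯ ⊗ ν_T)(A) + δ for every measurable A ⊆ X_1 × ⋯ × X_T. -/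
open MeasureTheory

/-- Bounded log-density of one round. -/
lemma dp_exists_density {X : Type*} [MeasurableSpace X] (μ ν : Measure X)
    [IsProbabilityMeasure μ] [IsProbabilityMeasure ν] (ε : ℝ) (hε : 0 < ε)
    (hμν : ∀ A : Set X, MeasurableSet A → μ A ≤ ENNReal.ofReal (Real.exp ε) * ν A)
    (hνμ : ∀ A : Set X, MeasurableSet A → ν A ≤ ENNReal.ofReal (Real.exp ε) * μ A) :
    ∃ f : X → ℝ, Measurable f ∧ (∀ x, f x ∈ Set.Icc (-ε) ε) ∧
      μ = ν.withDensity (fun x => ENNReal.ofReal (Real.exp (f x))) := by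
  have hac : μ ≪ ν := by
    refine Measure.AbsolutelyContinuous.mk fun s hs h0 => ?_
    have := hμν s hs
    rw [h0, mul_zero] at this
    exact le_antisymm this bot_le
  have hr := Measure.measurable_rnDeriv μ ν
  have h1 : ∀ᵐ x ∂ν, μ.rnDeriv ν x ≤ ENNReal.ofReal (Real.exp ε) := by
    refine ae_le_of_forall_setLIntegral_le_of_sigmaFinite hr fun s hs _ => ?_
    rw [Measure.setLIntegral_rnDeriv hac, setLIntegral_const]
    exact hμν s hs
  have h2 : ∀ᵐ x ∂ν, 1 ≤ ENNReal.ofReal (Real.exp ε) * μ.rnDeriv ν x := by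
    refine ae_le_of_forall_setLIntegral_le_of_sigmaFinite measurable_const fun s hs _ => ?_
    rw [lintegral_const_mul _ hr, Measure.setLIntegral_rnDeriv hac, setLIntegral_const, one_mul]
    exact hνμ s hs
  refine ⟨fun x => max (-ε) (min ε (Real.log (μ.rnDeriv ν x).toReal)), by fun_prop, ?_, ?_⟩
  · intro x
    exact ⟨le_max_left _ _, max_le (by linarith) (min_le_left _ _)⟩
  · conv_lhs => rw [← Measure.withDensity_rnDeriv_eq μ ν hac]
    refine withDensity_congr_ae ?_
    filter_upwards [h1, h2] with x hx1 hx2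
    have hfin : μ.rnDeriv ν x ≠ ⊤ := ne_top_of_le_ne_top ENNReal.ofReal_ne_top hx1
    obtain ⟨r, hr0, hrx⟩ : ∃ r : ℝ, 0 ≤ r ∧ μ.rnDeriv ν x = ENNReal.ofReal r :=
      ⟨(μ.rnDeriv ν x).toReal, ENNReal.toReal_nonneg, (ENNReal.ofReal_toReal hfin).symm⟩
    rw [hrx] at hx1 hx2 ⊢
    rw [ENNReal.ofReal_le_ofReal_iff (Real.exp_pos _).le] at hx1
    rw [← ENNReal.ofReal_mul (Real.exp_pos _).le, ENNReal.one_le_ofReal] at hx2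
    have hpos : 0 < r := by
      rcases hr0.eq_or_lt with h | h
      · rw [← h, mul_zero] at hx2; linarith
      · exact h
    rw [ENNReal.toReal_ofReal hr0]
    have ha : Real.log r ≤ ε := (Real.log_le_iff_le_exp hpos).2 hx1
    have hb : -ε ≤ Real.log r := by
      have := Real.log_nonneg hx2
      rw [Real.log_mul (Real.exp_pos _).ne' hpos.ne', Real.log_exp] at this
      linarith
    rw [min_eq_right ha, max_eq_right hb, Real.exp_log hpos]

lemma dp_pointwise (ε y : ℝ) (h : y ∈ Set.Icc (-ε) ε) :
    Real.exp y * y ≤ ε * (Real.exp ε - 1) + (Real.exp y - 1) := by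
  obtain ⟨h1, h2⟩ := h
  have hy := Real.add_one_le_exp y
  have key : y * (Real.exp y - 1) ≤ ε * (Real.exp ε - 1) := by
    rcases le_total 0 y with h0 | h0
    · have : Real.exp y ≤ Real.exp ε := Real.exp_le_exp.2 h2
      have h3 : 0 ≤ Real.exp y - 1 := by linarith
      exact mul_le_mul h2 (by linarith) h3 (by linarith)
    · have h3 := Real.add_one_le_exp ε
      have h5 : Real.exp y ≤ 1 := Real.exp_le_one_iff.2 h0
      have h4 : (-y) * (1 - Real.exp y) ≤ ε * (Real.exp ε - 1) :=
        mul_le_mul (by linarith) (by linarith) (by linarith) (by linarith)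
      linarith
  nlinarith

lemma dp_mean_le {X : Type*} [MeasurableSpace X] (μ ν : Measure X)
    [IsProbabilityMeasure μ] [IsProbabilityMeasure ν] (ε : ℝ) (f : X → ℝ) (hf : Measurable f)
    (hb : ∀ x, f x ∈ Set.Icc (-ε) ε)
    (hμ : μ = ν.withDensity (fun x => ENNReal.ofReal (Real.exp (f x)))) :
    ∫ x, f x ∂μ ≤ ε * (Real.exp ε - 1) := by
  have hexp : Integrable (fun x => Real.exp (f x)) ν := by
    refine Integrable.of_mem_Icc 0 (Real.exp ε) (by fun_prop) (ae_of_all _ fun x => ?_)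
    exact ⟨(Real.exp_pos _).le, Real.exp_le_exp.2 (hb x).2⟩
  have hone : ∫ x, Real.exp (f x) ∂ν = 1 := by
    rw [integral_eq_lintegral_of_nonneg_ae (ae_of_all _ fun x => (Real.exp_pos _).le)
      (by fun_prop)]
    have : μ Set.univ = 1 := measure_univ
    rw [hμ, withDensity_apply _ MeasurableSet.univ, Measure.restrict_univ] at this
    rw [this]; simp
  have hint : Integrable (fun x => Real.exp (f x) * f x) ν := by
    refine hexp.mul_bdd (c := ε) (by fun_prop) (ae_of_all _ fun x => ?_)
    rw [Real.norm_eq_abs]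
    exact abs_le.2 (hb x)
  have h1 : ∫ x, f x ∂μ = ∫ x, Real.exp (f x) * f x ∂ν := by
    rw [hμ, integral_withDensity_eq_integral_toReal_smul (by fun_prop)
      (ae_of_all _ fun x => ENNReal.ofReal_lt_top)]
    refine integral_congr_ae (ae_of_all _ fun x => ?_)
    simp [ENNReal.toReal_ofReal (Real.exp_pos _).le]
  rw [h1]
  calc ∫ x, Real.exp (f x) * f x ∂ν
      ≤ ∫ x, (ε * (Real.exp ε - 1) + (Real.exp (f x) - 1)) ∂ν :=
        integral_mono hint ((integrable_const _).add (hexp.sub (integrable_const _)))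
          fun x => dp_pointwise ε (f x) (hb x)
    _ = ε * (Real.exp ε - 1) := by
        have hsub : Integrable (fun x => Real.exp (f x) - 1) ν := hexp.sub (integrable_const _)
        rw [integral_add (integrable_const _) hsub,
          integral_sub hexp (integrable_const _), hone]
        simp

lemma dp_pi_withDensity {ι : Type*} [Fintype ι] {X : ι → Type*} [∀ i, MeasurableSpace (X i)]
    (μ ν : ∀ i, Measure (X i))
    [∀ i, IsProbabilityMeasure (μ i)] [∀ i, IsProbabilityMeasure (ν i)]
    (g : ∀ i, X i → ENNReal) (hg : ∀ i, Measurable (g i))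
    (hμ : ∀ i, μ i = (ν i).withDensity (g i)) :
    Measure.pi μ = (Measure.pi ν).withDensity (fun x => ∏ i, g i (x i)) := by
  refine (Measure.pi_eq fun s hs => ?_)
  rw [withDensity_apply _ (MeasurableSet.univ_pi hs),
    ← lintegral_indicator (MeasurableSet.univ_pi hs)]
  have hm : ∀ i, Measurable ((s i).indicator (g i)) := fun i => (hg i).indicator (hs i)
  have h1 : ∀ x : ∀ i, X i, (Set.univ.pi s).indicator (fun x => ∏ i, g i (x i)) x
      = ∏ i, (s i).indicator (g i) (x i) := by
    intro x
    by_cases hx : x ∈ Set.univ.pi s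
    · rw [Set.indicator_of_mem hx]
      exact Finset.prod_congr rfl fun i _ => (Set.indicator_of_mem (hx i trivial) _).symm
    · rw [Set.indicator_of_notMem hx]
      simp only [Set.mem_pi, not_forall] at hx
      obtain ⟨i, _, hi⟩ := hx
      exact (Finset.prod_eq_zero (Finset.mem_univ i) (Set.indicator_of_notMem hi _)).symm
  simp_rw [h1]
  rw [ProbabilityTheory.lintegral_prod_eq_prod_lintegral_of_indepFun Finset.univ
    (fun i (x : ∀ i, X i) => (s i).indicator (g i) (x i))
    (ProbabilityTheory.iIndepFun_pi fun i => (hm i).aemeasurable)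
    (fun i => (hm i).comp (measurable_pi_apply i))]
  refine Finset.prod_congr rfl fun i _ => ?_
  rw [(measurePreserving_eval ν i).lintegral_comp (hm i), lintegral_indicator (hs i), hμ i,
    withDensity_apply _ (hs i)]

/-- Advanced composition (independent, non-adaptive form), as in Theorem 1 of
the paper: if each round's pair of probability measures is mutually
`(ε, 0)`-indistinguishable, then over `T` rounds the product measures are
`(ε_total, δ)`-indistinguishable with
`ε_total = √(2·T·log(1/δ))·ε + T·ε·(e^ε − 1)`. -/
theorem dp_advanced_composition (T : ℕ) (hT : 1 ≤ T) (ε δ : ℝ)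
    (hε : 0 < ε) (hδ0 : 0 < δ) (hδ1 : δ < 1)
    (X : Fin T → Type*) [∀ i, MeasurableSpace (X i)]
    (μ ν : ∀ i, Measure (X i))
    [∀ i, IsProbabilityMeasure (μ i)] [∀ i, IsProbabilityMeasure (ν i)]
    (hμν : ∀ i, ∀ A : Set (X i), MeasurableSet A →
      μ i A ≤ ENNReal.ofReal (Real.exp ε) * ν i A)
    (hνμ : ∀ i, ∀ A : Set (X i), MeasurableSet A →
      ν i A ≤ ENNReal.ofReal (Real.exp ε) * μ i A) :
    ∀ A : Set (∀ i, X i), MeasurableSet A →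
      Measure.pi μ A ≤
        ENNReal.ofReal
            (Real.exp (Real.sqrt (2 * T * Real.log (1 / δ)) * ε + T * ε * (Real.exp ε - 1))) *
          Measure.pi ν A + ENNReal.ofReal δ := by
  intro A hA
  choose f hfm hfb hfd using fun i => dp_exists_density (μ i) (ν i) ε hε (hμν i) (hνμ i)
  have hpi := dp_pi_withDensity μ ν _ (fun i => by have := hfm i; fun_prop) hfd
  have hTpos : (0 : ℝ) < T := by exact_mod_cast hT
  have hlog : 0 < Real.log (1 / δ) := Real.log_pos (by rw [lt_div_iff₀ hδ0]; linarith)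
  set t : ℝ := Real.sqrt (2 * T * Real.log (1 / δ)) * ε with ht
  have ht0 : 0 ≤ t := by positivity
  set m : Fin T → ℝ := fun i => ∫ x, f i x ∂(μ i) with hm
  have hmle : ∀ i, m i ≤ ε * (Real.exp ε - 1) := fun i =>
    dp_mean_le (μ i) (ν i) ε (f i) (hfm i) (hfb i) (hfd i)
  have hsub : ∀ i ∈ (Finset.univ : Finset (Fin T)), ProbabilityTheory.HasSubgaussianMGF
      (fun x : ∀ i, X i => f i (x i) - m i) ((‖ε - (-ε)‖₊ / 2) ^ 2) (Measure.pi μ) := by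
    intro i _
    have h := ProbabilityTheory.hasSubgaussianMGF_of_mem_Icc (μ := Measure.pi μ)
      (X := fun x : ∀ i, X i => f i (x i)) (a := -ε) (b := ε)
      ((hfm i).comp (measurable_pi_apply i)).aemeasurable (ae_of_all _ fun x => hfb i (x i))
    have he : ∫ x, f i (x i) ∂(Measure.pi μ) = m i := by
      rw [hm]
      simp only
      rw [← (measurePreserving_eval μ i).map_eq,
        integral_map (measurable_pi_apply i).aemeasurable (hfm i).aestronglyMeasurable]
    rwa [he] at h
  have hoeff := ProbabilityTheory.HasSubgaussianMGF.measure_sum_ge_le_of_iIndepFun (μ := Measure.pi μ)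
    (ProbabilityTheory.iIndepFun_pi (μ := μ) (X := fun i x => f i x - m i)
      fun i => ((hfm i).sub_const _).aemeasurable) hsub ht0
  have hexp : Real.exp (-t ^ 2 / (2 * ((∑ i : Fin T, (‖ε - (-ε)‖₊ / 2) ^ 2 : NNReal) : ℝ))) = δ := by
    have h1 : ((∑ i : Fin T, (‖ε - (-ε)‖₊ / 2) ^ 2 : NNReal) : ℝ) = T * ε ^ 2 := by
      push_cast
      rw [Real.norm_eq_abs, abs_of_pos (by linarith)]
      simp
    have h2 : t ^ 2 = 2 * T * Real.log (1 / δ) * ε ^ 2 := by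
      rw [ht, mul_pow, Real.sq_sqrt (by positivity)]
    rw [h1, h2]
    have h3 : -(2 * T * Real.log (1 / δ) * ε ^ 2) / (2 * (T * ε ^ 2)) = Real.log δ := by
      rw [one_div, Real.log_inv]; field_simp
    rw [h3, Real.exp_log hδ0]
  rw [hexp] at hoeff
  set B : Set (∀ i, X i) := {x | t ≤ ∑ i, (f i (x i) - m i)} with hB
  have hBm : MeasurableSet B := by
    refine measurableSet_le measurable_const ?_
    exact Finset.measurable_sum _ fun i _ =>
      ((hfm i).comp (measurable_pi_apply i)).sub_const _
  have hμB : Measure.pi μ B ≤ ENNReal.ofReal δ := by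
    rw [← ofReal_measureReal]
    exact ENNReal.ofReal_le_ofReal hoeff
  have hdiff : Measure.pi μ (A \ B) ≤
      ENNReal.ofReal (Real.exp (t + T * ε * (Real.exp ε - 1))) * Measure.pi ν A := by
    rw [hpi, withDensity_apply _ (hA.diff hBm)]
    calc _ ≤ ∫⁻ x in A \ B, ENNReal.ofReal (Real.exp (t + T * ε * (Real.exp ε - 1)))
            ∂(Measure.pi ν) := by
          refine setLIntegral_mono measurable_const fun x hx => ?_
          rw [← ENNReal.ofReal_prod_of_nonneg fun i _ => (Real.exp_pos _).le, ← Real.exp_sum]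
          refine ENNReal.ofReal_le_ofReal (Real.exp_le_exp.2 ?_)
          have h1 : ∑ i, (f i (x i) - m i) < t := not_le.1 hx.2
          rw [Finset.sum_sub_distrib] at h1
          have h2 : ∑ i, m i ≤ T * (ε * (Real.exp ε - 1)) := by
            have := Finset.sum_le_sum fun i (_ : i ∈ Finset.univ) => hmle i
            simpa using this
          linarith
      _ ≤ _ := by
          rw [setLIntegral_const]
          gcongr
          exact Set.sdiff_subset
  calc Measure.pi μ A ≤ Measure.pi μ (A \ B ∪ B) := measure_mono (by
        intro x hx; by_cases h : x ∈ B <;> simp [h, hx])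
    _ ≤ Measure.pi μ (A \ B) + Measure.pi μ B := measure_union_le _ _
    _ ≤ _ := add_le_add hdiff hμB
end
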